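/- arXiv:2102.10769 — 2 statements merged into one kernel-verified Lean document; each statement's English description precedes it below -/
import Mathlib

section
/- Information-gain bound for kernelized nonlinear regulators (core chain of the KNR information-gain proposition). Let d ≥ 1, λ > 0, T, H ∈ ℕ with T, H ≥ 1, and let φ_{t,h} ∈ ℝ^d for 0 ≤ t ≤ T−1, 0 ≤ h ≤ H−1 with ‖φ_{t,h}‖₂ ≤ 1. Define Σ_t := λ I_d + ∑_{k=0}^{t−1} ∑_{h=0}^{H−1} φ_{k,h} φ_{k,h}ᵀ. Let (c_t)_{t=0}^{T−1} be a nondecreasing sequence of reals with c_t ≥ 1 for all t. Then ∑_{t=0}^{T−1} ∑_{h=0}^{H−1} min{ c_t · φ_{t,h}ᵀ Σ_t^{−1} φ_{t,h}, 1 } ≤ 2 H c_{T−1} · ln( det(Σ_T) / det(λ I_d) ) ≤ 2 H c_{T−1} · d · ln( 1 + T H / λ ). -/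
open Finset Matrix

/-!
For `A` positive definite and `B` positive semidefinite, factor `B = Vᴴ V`; then
`det (A + B) / det A = det (1 + V A⁻¹ Vᴴ) = ∏ i, (1 + μ i)` with `μ i ≥ 0` and
`∑ i, μ i = tr (A⁻¹ B)`. Comparing the product with the sum gives
`1 + tr (A⁻¹ B) ≤ det (A + B) / det A ≤ (1 + tr (A⁻¹ B)) ^ n` in dimension `n`,
and for `B = ∑ i, v i (v i)ᵀ` the trace is `∑ i, (v i)ᵀ A⁻¹ (v i)`.
The lower bound, applied to each round and telescoped through `min x 1 ≤ 2 log (1 + x)`, is the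
first inequality of the chain; the upper bound, applied once with `A = λ I`, is the second.
-/

section ScalarInequalities

variable {ι : Type*} {s : Finset ι}

lemma one_add_sum_le_prod_one_add {R : Type*} [CommSemiring R] [PartialOrder R]
    [IsOrderedRing R] {f : ι → R} (hf : ∀ i ∈ s, 0 ≤ f i) :
    1 + ∑ i ∈ s, f i ≤ ∏ i ∈ s, (1 + f i) := by
  induction s using Finset.cons_induction with
  | empty => simp
  | cons a s ha ih =>
    rw [forall_mem_cons] at hf
    have hsum : 0 ≤ ∑ i ∈ s, f i := sum_nonneg hf.2
    have hcross : 0 ≤ f a * ∑ i ∈ s, f i := mul_nonneg hf.1 hsum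
    calc 1 + ∑ i ∈ cons a s ha, f i
        = (1 + f a) + ∑ i ∈ s, f i := by rw [sum_cons, add_assoc]
      _ ≤ (1 + f a) + ∑ i ∈ s, f i + f a * ∑ i ∈ s, f i := le_add_of_nonneg_right hcross
      _ = (1 + f a) * (1 + ∑ i ∈ s, f i) := by ring
      _ ≤ (1 + f a) * ∏ i ∈ s, (1 + f i) :=
        mul_le_mul_of_nonneg_left (ih hf.2) (add_nonneg zero_le_one hf.1)
      _ = ∏ i ∈ cons a s ha, (1 + f i) := by rw [prod_cons]

lemma prod_one_add_le_one_add_sum_pow_card {R : Type*} [CommSemiring R] [PartialOrder R]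
    [IsOrderedRing R] {f : ι → R} (hf : ∀ i ∈ s, 0 ≤ f i) :
    ∏ i ∈ s, (1 + f i) ≤ (1 + ∑ i ∈ s, f i) ^ #s :=
  calc ∏ i ∈ s, (1 + f i) ≤ ∏ _i ∈ s, (1 + ∑ j ∈ s, f j) :=
        prod_le_prod (fun i hi ↦ add_nonneg zero_le_one (hf i hi))
          fun _ hi ↦ by gcongr; exact single_le_sum hf hi
    _ = (1 + ∑ i ∈ s, f i) ^ #s := prod_const _

lemma min_one_le_two_mul_log_one_add {x : ℝ} (hx : 0 ≤ x) :
    min x 1 ≤ 2 * Real.log (1 + x) := by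
  have hmin : min x 1 ≤ 2 * (2 * x / (x + 2)) := by
    rw [← mul_div_assoc, le_div_iff₀ (by positivity)]
    nlinarith [min_le_left x 1, min_le_right x 1]
  linarith [Real.le_log_one_add_of_nonneg hx]

lemma min_mul_one_le_two_mul_log_one_add {c x : ℝ} (hc : 1 ≤ c) (hx : 0 ≤ x) :
    min (c * x) 1 ≤ 2 * c * Real.log (1 + x) :=
  calc min (c * x) 1 ≤ min (c * x) (c * 1) := min_le_min_left _ (by rwa [mul_one])
    _ = c * min x 1 := (mul_min_of_nonneg x 1 (zero_le_one.trans hc)).symm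
    _ ≤ c * (2 * Real.log (1 + x)) := by gcongr; exact min_one_le_two_mul_log_one_add hx
    _ = 2 * c * Real.log (1 + x) := by ring

lemma sum_min_mul_one_le_log_one_add_sum {c : ℝ} {x : ι → ℝ} (hc : 1 ≤ c)
    (hx : ∀ i ∈ s, 0 ≤ x i) :
    ∑ i ∈ s, min (c * x i) 1 ≤ 2 * #s * c * Real.log (1 + ∑ i ∈ s, x i) := by
  have hterm : ∀ i ∈ s, min (c * x i) 1 ≤ 2 * c * Real.log (1 + ∑ j ∈ s, x j) := by
    intro i hi
    have hxi := hx i hi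
    have hle : x i ≤ ∑ j ∈ s, x j := single_le_sum hx hi
    exact (min_mul_one_le_two_mul_log_one_add hc hxi).trans (by gcongr)
  calc ∑ i ∈ s, min (c * x i) 1 ≤ #s • (2 * c * Real.log (1 + ∑ i ∈ s, x i)) :=
        sum_le_card_nsmul _ _ _ hterm
    _ = 2 * #s * c * Real.log (1 + ∑ i ∈ s, x i) := by rw [nsmul_eq_mul]; ring

end ScalarInequalities

section MatrixDeterminant

open scoped ComplexOrder

variable {n 𝕜 : Type*} [Fintype n] [DecidableEq n] [RCLike 𝕜] {A B S : Matrix n n 𝕜}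

lemma det_one_add_eq_prod_eigenvalues (hS : S.IsHermitian) :
    (1 + S).det = ∏ i, (1 + (hS.eigenvalues i : 𝕜)) := by
  let U : Matrix n n 𝕜 := hS.eigenvectorUnitary
  let D : Matrix n n 𝕜 := diagonal (RCLike.ofReal ∘ hS.eigenvalues)
  have hUDU : S = U * D * star U := hS.spectral_theorem
  have hU : star U * U = 1 := Unitary.coe_star_mul_self hS.eigenvectorUnitary
  calc (1 + S).det = (1 + U * (D * star U)).det := by rw [← mul_assoc, ← hUDU]
    _ = (1 + D).det := by rw [det_one_add_mul_comm, mul_assoc, hU, mul_one]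
    _ = ∏ i, (1 + (hS.eigenvalues i : 𝕜)) := by
      rw [← diagonal_one, diagonal_add, det_diagonal]; rfl

lemma one_add_trace_le_det_one_add (hS : S.PosSemidef) : 1 + S.trace ≤ (1 + S).det := by
  rw [det_one_add_eq_prod_eigenvalues hS.isHermitian, hS.isHermitian.trace_eq_sum_eigenvalues]
  exact_mod_cast one_add_sum_le_prod_one_add fun i _ ↦ hS.eigenvalues_nonneg i

lemma det_one_add_le_one_add_trace_pow (hS : S.PosSemidef) :
    (1 + S).det ≤ (1 + S.trace) ^ Fintype.card n := by
  rw [det_one_add_eq_prod_eigenvalues hS.isHermitian, hS.isHermitian.trace_eq_sum_eigenvalues]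
  exact_mod_cast prod_one_add_le_one_add_sum_pow_card fun i _ ↦ hS.eigenvalues_nonneg i

lemma exists_posSemidef_det_add_eq_det_mul_det_one_add (hA : A.PosDef) (hB : B.PosSemidef) :
    ∃ S : Matrix n n 𝕜, S.PosSemidef ∧ S.trace = (A⁻¹ * B).trace ∧
      (A + B).det = A.det * (1 + S).det := by
  open scoped MatrixOrder in
  obtain ⟨V, rfl⟩ := CStarAlgebra.nonneg_iff_eq_star_mul_self.mp hB.nonneg
  refine ⟨V * A⁻¹ * Vᴴ, hA.inv.posSemidef.mul_mul_conjTranspose_same V, ?_,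
    det_add_mul _ _ hA.det_pos.ne'.isUnit⟩
  rw [mul_assoc, trace_mul_comm, mul_assoc, star_eq_conjTranspose]

lemma det_mul_one_add_trace_inv_mul_le_det_add (hA : A.PosDef) (hB : B.PosSemidef) :
    A.det * (1 + (A⁻¹ * B).trace) ≤ (A + B).det := by
  obtain ⟨S, hS, htrace, hdet⟩ := exists_posSemidef_det_add_eq_det_mul_det_one_add hA hB
  rw [hdet, ← htrace]
  exact mul_le_mul_of_nonneg_left (one_add_trace_le_det_one_add hS) hA.det_pos.le

lemma det_add_le_det_mul_one_add_trace_inv_mul_pow (hA : A.PosDef) (hB : B.PosSemidef) :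
    (A + B).det ≤ A.det * (1 + (A⁻¹ * B).trace) ^ Fintype.card n := by
  obtain ⟨S, hS, htrace, hdet⟩ := exists_posSemidef_det_add_eq_det_mul_det_one_add hA hB
  rw [hdet, ← htrace]
  exact mul_le_mul_of_nonneg_left (det_one_add_le_one_add_trace_pow hS) hA.det_pos.le

end MatrixDeterminant

section RankOneSums

variable {n ι : Type*}

lemma trace_mul_sum_vecMulVec {R : Type*} [CommSemiring R] [Fintype n] (M : Matrix n n R)
    (s : Finset ι) (u v : ι → n → R) :
    (M * ∑ i ∈ s, vecMulVec (u i) (v i)).trace = ∑ i ∈ s, v i ⬝ᵥ (M *ᵥ u i) := by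
  simp only [mul_sum, trace_sum, mul_vecMulVec, trace_vecMulVec, dotProduct_comm]

lemma posSemidef_sum_vecMulVec_self [Finite n] (s : Finset ι) (v : ι → n → ℝ) :
    (∑ i ∈ s, vecMulVec (v i) (v i)).PosSemidef :=
  posSemidef_sum s fun i _ ↦ posSemidef_vecMulVec_self_star (v i)

variable [Fintype n] [DecidableEq n] {A : Matrix n n ℝ}

lemma dotProduct_inv_mulVec_nonneg (hA : A.PosDef) (v : n → ℝ) : 0 ≤ v ⬝ᵥ (A⁻¹ *ᵥ v) :=
  hA.inv.posSemidef.dotProduct_mulVec_nonneg v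

lemma log_one_add_sum_le_log_det_add_div (hA : A.PosDef) (s : Finset ι) (v : ι → n → ℝ) :
    Real.log (1 + ∑ i ∈ s, v i ⬝ᵥ (A⁻¹ *ᵥ v i)) ≤
      Real.log ((A + ∑ i ∈ s, vecMulVec (v i) (v i)).det / A.det) := by
  have hdet := det_mul_one_add_trace_inv_mul_le_det_add hA (posSemidef_sum_vecMulVec_self s v)
  rw [trace_mul_sum_vecMulVec, mul_comm, ← le_div_iff₀ hA.det_pos] at hdet
  have hsum : 0 ≤ ∑ i ∈ s, v i ⬝ᵥ (A⁻¹ *ᵥ v i) :=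
    sum_nonneg fun i _ ↦ dotProduct_inv_mulVec_nonneg hA (v i)
  exact Real.log_le_log (by positivity) hdet

lemma log_det_add_div_le_card_mul_log_one_add_sum (hA : A.PosDef) (s : Finset ι) (v : ι → n → ℝ) :
    Real.log ((A + ∑ i ∈ s, vecMulVec (v i) (v i)).det / A.det) ≤
      Fintype.card n * Real.log (1 + ∑ i ∈ s, v i ⬝ᵥ (A⁻¹ *ᵥ v i)) := by
  have hB := posSemidef_sum_vecMulVec_self s v
  have hdet := det_add_le_det_mul_one_add_trace_inv_mul_pow hA hB
  rw [trace_mul_sum_vecMulVec, mul_comm, ← div_le_iff₀ hA.det_pos] at hdet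
  rw [← Real.log_pow]
  exact Real.log_le_log (div_pos (hA.add_posSemidef hB).det_pos hA.det_pos) hdet

lemma sum_min_mul_one_le_log_det_add_div (hA : A.PosDef) (s : Finset ι) (v : ι → n → ℝ)
    {c : ℝ} (hc : 1 ≤ c) :
    ∑ i ∈ s, min (c * (v i ⬝ᵥ (A⁻¹ *ᵥ v i))) 1 ≤
      2 * #s * c * Real.log ((A + ∑ i ∈ s, vecMulVec (v i) (v i)).det / A.det) :=
  (sum_min_mul_one_le_log_one_add_sum hc fun i _ ↦ dotProduct_inv_mulVec_nonneg hA (v i)).trans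
    (mul_le_mul_of_nonneg_left (log_one_add_sum_le_log_det_add_div hA s v) (by positivity))

end RankOneSums

section RegularizedCovariance

variable {n ι : Type*}

/-- The regularized covariance matrix `Σ_t` of the features `φ k i` observed in the rounds `k < t`,
each round contributing the finite batch `i ∈ s`, with regularizer `Λ` (the value at `t = 0`). -/
def regularizedCovariance (Λ : Matrix n n ℝ) (s : Finset ι) (φ : ℕ → ι → n → ℝ) (t : ℕ) :
    Matrix n n ℝ :=
  Λ + ∑ k ∈ range t, ∑ i ∈ s, vecMulVec (φ k i) (φ k i)

variable {Λ : Matrix n n ℝ} {s : Finset ι} {φ : ℕ → ι → n → ℝ}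

lemma regularizedCovariance_zero : regularizedCovariance Λ s φ 0 = Λ := by
  rw [regularizedCovariance, range_zero, sum_empty, add_zero]

lemma regularizedCovariance_succ (t : ℕ) : regularizedCovariance Λ s φ (t + 1) =
    regularizedCovariance Λ s φ t + ∑ i ∈ s, vecMulVec (φ t i) (φ t i) := by
  simp only [regularizedCovariance, sum_range_succ, add_assoc]

lemma regularizedCovariance_eq_add_sum_product (t : ℕ) : regularizedCovariance Λ s φ t =
    Λ + ∑ p ∈ range t ×ˢ s, vecMulVec (φ p.1 p.2) (φ p.1 p.2) := by
  rw [sum_product, regularizedCovariance]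

lemma posDef_regularizedCovariance [Finite n] (hΛ : Λ.PosDef) (t : ℕ) :
    (regularizedCovariance Λ s φ t).PosDef := by
  rw [regularizedCovariance_eq_add_sum_product]
  exact hΛ.add_posSemidef (posSemidef_sum_vecMulVec_self _ _)

variable [Fintype n] [DecidableEq n]

lemma sum_log_det_regularizedCovariance_succ_div (hΛ : Λ.PosDef) (T : ℕ) :
    ∑ t ∈ range T, Real.log
        ((regularizedCovariance Λ s φ (t + 1)).det / (regularizedCovariance Λ s φ t).det) =
      Real.log ((regularizedCovariance Λ s φ T).det / Λ.det) := by
  have hdet (t : ℕ) : (regularizedCovariance Λ s φ t).det ≠ 0 :=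
    (posDef_regularizedCovariance hΛ t).det_pos.ne'
  simp only [Real.log_div (hdet _) (hdet _)]
  rw [sum_range_sub fun t ↦ Real.log (regularizedCovariance Λ s φ t).det,
    regularizedCovariance_zero, Real.log_div (hdet T) hΛ.det_pos.ne']

lemma sum_min_mul_one_le_log_det_regularizedCovariance_div (hΛ : Λ.PosDef) {T : ℕ}
    {c : ℕ → ℝ} {C : ℝ} (hC : 1 ≤ C) (hc : ∀ t < T, c t ≤ C) :
    ∑ t ∈ range T, ∑ i ∈ s,
        min (c t * (φ t i ⬝ᵥ ((regularizedCovariance Λ s φ t)⁻¹ *ᵥ φ t i))) 1 ≤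
      2 * #s * C * Real.log ((regularizedCovariance Λ s φ T).det / Λ.det) := by
  rw [← sum_log_det_regularizedCovariance_succ_div hΛ, mul_sum]
  refine sum_le_sum fun t ht ↦ ?_
  have hpos := posDef_regularizedCovariance (s := s) (φ := φ) hΛ t
  rw [regularizedCovariance_succ]
  refine le_trans ?_ (sum_min_mul_one_le_log_det_add_div hpos s (φ t) hC)
  gcongr with i
  · exact dotProduct_inv_mulVec_nonneg hpos (φ t i)
  · exact hc t (mem_range.mp ht)

lemma log_det_regularizedCovariance_div_le (hΛ : Λ.PosDef) (T : ℕ) :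
    Real.log ((regularizedCovariance Λ s φ T).det / Λ.det) ≤
      Fintype.card n * Real.log (1 + ∑ t ∈ range T, ∑ i ∈ s, φ t i ⬝ᵥ (Λ⁻¹ *ᵥ φ t i)) := by
  rw [regularizedCovariance_eq_add_sum_product,
    ← sum_product' (range T) s fun t i ↦ φ t i ⬝ᵥ (Λ⁻¹ *ᵥ φ t i)]
  exact log_det_add_div_le_card_mul_log_one_add_sum hΛ _ _

end RegularizedCovariance

section BoundedFeatures

variable {n ι : Type*} [Fintype n] [DecidableEq n] {lam : ℝ}

lemma dotProduct_inv_smul_one_mulVec_self (hlam : lam ≠ 0) (x : EuclideanSpace ℝ n) :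
    x ⬝ᵥ ((lam • (1 : Matrix n n ℝ))⁻¹ *ᵥ x) = ‖x‖ ^ 2 / lam := by
  have hinv : (lam • (1 : Matrix n n ℝ))⁻¹ = lam⁻¹ • 1 :=
    inv_eq_left_inv (by rw [smul_mul_smul_comm, inv_mul_cancel₀ hlam, one_smul, one_mul])
  rw [hinv, smul_mulVec, one_mulVec, dotProduct_smul, smul_eq_mul, inv_mul_eq_div,
    EuclideanSpace.real_norm_sq_eq]
  simp only [dotProduct, sq]

lemma log_det_regularizedCovariance_smul_one_div_le (hlam : 0 < lam) {T : ℕ} {s : Finset ι}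
    {φ : ℕ → ι → EuclideanSpace ℝ n} (hφ : ∀ t < T, ∀ i ∈ s, ‖φ t i‖ ≤ 1) :
    Real.log ((regularizedCovariance (lam • 1) s (fun t i ↦ φ t i) T).det /
        (lam • (1 : Matrix n n ℝ)).det) ≤
      Fintype.card n * Real.log (1 + T * #s / lam) := by
  refine (log_det_regularizedCovariance_div_le (PosDef.one.smul hlam) T).trans ?_
  simp only [dotProduct_inv_smul_one_mulVec_self hlam.ne']
  gcongr
  calc ∑ t ∈ range T, ∑ i ∈ s, ‖φ t i‖ ^ 2 / lam ≤ ∑ _t ∈ range T, ∑ _i ∈ s, 1 / lam := by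
        gcongr with t ht i hi
        exact pow_le_one₀ (norm_nonneg _) (hφ t (mem_range.mp ht) i hi)
    _ = T * #s / lam := by
        simp only [sum_const, card_range, nsmul_eq_mul]; ring

theorem knr_information_gain_chain_general (hlam : 0 < lam) {T : ℕ} (s : Finset ι)
    {φ : ℕ → ι → EuclideanSpace ℝ n} (hφ : ∀ t < T, ∀ i ∈ s, ‖φ t i‖ ≤ 1)
    {Sig : ℕ → Matrix n n ℝ}
    (hSig : ∀ t, Sig t = lam • (1 : Matrix n n ℝ) +
      ∑ k ∈ range t, ∑ i ∈ s, vecMulVec (φ k i) (φ k i))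
    {c : ℕ → ℝ} {C : ℝ} (hC : 1 ≤ C) (hc : ∀ t < T, c t ≤ C) :
    (∑ t ∈ range T, ∑ i ∈ s, min (c t * (φ t i ⬝ᵥ ((Sig t)⁻¹ *ᵥ φ t i))) 1 ≤
      2 * #s * C * Real.log ((Sig T).det / (lam • (1 : Matrix n n ℝ)).det)) ∧
    (2 * #s * C * Real.log ((Sig T).det / (lam • (1 : Matrix n n ℝ)).det) ≤
      2 * #s * C * Fintype.card n * Real.log (1 + T * #s / lam)) := by
  obtain rfl : Sig = regularizedCovariance (lam • 1) s fun t i ↦ φ t i := funext hSig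
  refine ⟨sum_min_mul_one_le_log_det_regularizedCovariance_div (PosDef.one.smul hlam) hC hc, ?_⟩
  rw [mul_assoc _ (Fintype.card n : ℝ)]
  gcongr
  exact log_det_regularizedCovariance_smul_one_div_le hlam hφ

end BoundedFeatures

/-- **Information-gain bound for kernelized nonlinear regulators.** For feature
vectors of Euclidean norm at most 1, `Σ_t = λ I + ∑_{k<t} ∑_{h<H} φ_{k,h}φ_{k,h}ᵀ`,
and a nondecreasing sequence `c_t ≥ 1`,
`∑_{t<T} ∑_{h<H} min{c_t · φ_{t,h}ᵀ Σ_t⁻¹ φ_{t,h}, 1}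
  ≤ 2 H c_{T−1} ln(det Σ_T / det(λ I)) ≤ 2 H c_{T−1} d ln(1 + TH/λ)`. -/
theorem knr_information_gain_chain
    (d : ℕ) (hd : 1 ≤ d) (lam : ℝ) (hlam : 0 < lam)
    (T H : ℕ) (hT : 1 ≤ T) (hH : 1 ≤ H)
    (φ : ℕ → ℕ → EuclideanSpace ℝ (Fin d))
    (hφ : ∀ t < T, ∀ h < H, ‖φ t h‖ ≤ 1)
    (Sig : ℕ → Matrix (Fin d) (Fin d) ℝ)
    (hSig : ∀ t, Sig t = lam • (1 : Matrix (Fin d) (Fin d) ℝ) +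
      ∑ k ∈ range t, ∑ h ∈ range H, vecMulVec (φ k h) (φ k h))
    (c : ℕ → ℝ) (hc_mono : Monotone c) (hc_one : ∀ t, 1 ≤ c t) :
    (∑ t ∈ range T, ∑ h ∈ range H,
        min (c t * (φ t h ⬝ᵥ ((Sig t)⁻¹ *ᵥ φ t h))) 1 ≤
      2 * H * c (T - 1) *
        Real.log ((Sig T).det / (lam • (1 : Matrix (Fin d) (Fin d) ℝ)).det)) ∧
    (2 * H * c (T - 1) *
        Real.log ((Sig T).det / (lam • (1 : Matrix (Fin d) (Fin d) ℝ)).det) ≤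
      2 * H * c (T - 1) * d * Real.log (1 + T * H / lam)) := by
  have hφ' : ∀ t < T, ∀ h ∈ range H, ‖φ t h‖ ≤ 1 := fun t ht h hh ↦ hφ t ht h (mem_range.mp hh)
  simpa only [card_range, Fintype.card_fin] using knr_information_gain_chain_general hlam _ hφ' hSig
    (hc_one (T - 1)) fun t ht ↦ hc_mono (Nat.le_sub_one_of_lt ht)
end

section
/- Per-iteration regret bound (intermediate claim in the proof of the main theorem). Consider a finite-horizon MDP with finite S, A, initial state s₀, horizon H ≥ 1, true transition kernel P*, and true cost c : S → [0,1]. Let P̂ be a transition kernel and σ : S × A → ℝ≥0 satisfy ‖P̂(·|s,a) − P*(·|s,a)‖₁ ≤ min{σ(s,a), 2} for all (s,a). Define the bonus b(s,a) := H · min{σ(s,a), 2} and the optimistic cost c̃(s,a) := c(s) − b(s,a). Let π be any policy and π^e the expert policy, and suppose V^{π}_{P̂; c̃} ≤ V^{π^e}_{P*; c} + 2Hε for some ε ≥ 0. Then V^{π}_{P*; c} − V^{π^e}_{P*; c} ≤ 6 H³ · E_{(s,a)∼d^{π}_{P*}}[ min{σ(s,a), 1} ] + 2 H ε. -/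
open Finset

noncomputable section

/-- Value function with `k` steps to go, under transition kernel `P`,
policy `π` and cost `g`. -/
def Vsteps {S A : Type*} [Fintype S] [Fintype A]
    (P : S → A → S → ℝ) (π : S → A → ℝ) (g : S → A → ℝ) : ℕ → S → ℝ
  | 0, _ => 0
  | (k + 1), s => ∑ a, π s a * (g s a + ∑ s', P s a s' * Vsteps P π g k s')

/-- `Vh H P π g h s` is the value function `V^π_{P,g;h}(s)` for horizon `H`. -/
def Vh {S A : Type*} [Fintype S] [Fintype A] (H : ℕ)
    (P : S → A → S → ℝ) (π : S → A → ℝ) (g : S → A → ℝ) (h : ℕ) (s : S) : ℝ :=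
  Vsteps P π g (H - h) s

/-- Distribution over states at step `h`, starting at `s₀`, following `π` under `P`. -/
def stateDist {S A : Type*} [Fintype S] [Fintype A] [DecidableEq S]
    (s₀ : S) (P : S → A → S → ℝ) (π : S → A → ℝ) : ℕ → S → ℝ
  | 0, s => if s = s₀ then 1 else 0
  | (h + 1), s => ∑ s', ∑ a, stateDist s₀ P π h s' * π s' a * P s' a s

/-- The step-`h` state-action occupancy measure. -/
def occ {S A : Type*} [Fintype S] [Fintype A] [DecidableEq S]
    (s₀ : S) (P : S → A → S → ℝ) (π : S → A → ℝ) (h : ℕ) (s : S) (a : A) : ℝ :=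
  stateDist s₀ P π h s * π s a

/-- The average state-action occupancy measure
`d^π_P(s,a) = (1/H) ∑_{h<H} d^π_{P,h}(s,a)`. -/
def davg {S A : Type*} [Fintype S] [Fintype A] [DecidableEq S]
    (s₀ : S) (P : S → A → S → ℝ) (π : S → A → ℝ) (H : ℕ) (s : S) (a : A) : ℝ :=
  (1 / H) * ∑ h ∈ range H, occ s₀ P π h s a

/-!
A bound `u` on the one-step discrepancy between two models bounds the difference of their values by
the value of the cost `u`: in the induction, the discrepancy is evaluated against the value function
of the second model, and the remaining error propagates along the first. For the learned model with
the optimistic cost, the bonus contributes `H * τ` to the discrepancy, where `τ = min σ 2`, and the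
kernel error at most `τ` times a uniform bound on the optimistic values. Since the error propagates
along the true model, the total is an expectation under the true occupancy measure.
-/

section StdSimplex

variable {ι : Type*} [Fintype ι] {p f : ι → ℝ} {B : ℝ}

lemma abs_sum_mul_le_of_mem_stdSimplex (hp : p ∈ stdSimplex ℝ ι) (hf : ∀ i, |f i| ≤ B) :
    |∑ i, p i * f i| ≤ B :=
  abs_le.mpr <| (convex_Icc (-B) B).sum_mem (fun i _ => hp.1 i) hp.2 fun i _ => abs_le.mp (hf i)

lemma sum_mul_le_sum_abs_mul (hf : ∀ i, |f i| ≤ B) : ∑ i, p i * f i ≤ (∑ i, |p i|) * B := by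
  rw [sum_mul]
  refine sum_le_sum fun i _ => (le_abs_self _).trans ?_
  rw [abs_mul]
  exact mul_le_mul_of_nonneg_left (hf i) (abs_nonneg _)

end StdSimplex

lemma min_le_mul_min_one {x r : ℝ} (hx : 0 ≤ x) (hr : 1 ≤ r) : min x r ≤ r * min x 1 := by
  rw [mul_min_of_nonneg _ _ (zero_le_one.trans hr), mul_one]
  exact min_le_min_right r (le_mul_of_one_le_left hx hr)

section Values

variable {S A : Type*} [Fintype S] [Fintype A] {P Q : S → A → S → ℝ} {π : S → A → ℝ}

lemma abs_Vsteps_le {g : S → A → ℝ} {B : ℝ} (hP : ∀ s a, P s a ∈ stdSimplex ℝ S)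
    (hπ : ∀ s, π s ∈ stdSimplex ℝ A) (hg : ∀ s a, |g s a| ≤ B) (k : ℕ) (s : S) :
    |Vsteps P π g k s| ≤ k * B := by
  induction k generalizing s with
  | zero => simp [Vsteps]
  | succ k ih =>
    refine abs_sum_mul_le_of_mem_stdSimplex (hπ s) fun a => ?_
    calc |g s a + ∑ s', P s a s' * Vsteps P π g k s'|
        ≤ |g s a| + |∑ s', P s a s' * Vsteps P π g k s'| := abs_add_le _ _
      _ ≤ B + k * B := add_le_add (hg s a) (abs_sum_mul_le_of_mem_stdSimplex (hP s a) ih)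
      _ = (k + 1 : ℕ) * B := by push_cast; ring

lemma Vsteps_sub_Vsteps_le_Vsteps {f g u : S → A → ℝ} (hP : ∀ s a s', 0 ≤ P s a s')
    (hπ : ∀ s a, 0 ≤ π s a) (n : ℕ)
    (hu : ∀ k < n, ∀ s a,
      f s a - g s a + ∑ s', (P s a s' - Q s a s') * Vsteps Q π g k s' ≤ u s a) (s : S) :
    Vsteps P π f n s - Vsteps Q π g n s ≤ Vsteps P π u n s := by
  induction n generalizing s with
  | zero => simp [Vsteps]
  | succ k ih =>
    have ih' := ih fun j hj => hu j (hj.trans k.lt_succ_self)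
    simp only [Vsteps, ← sum_sub_distrib, ← mul_sub]
    refine sum_le_sum fun a _ => mul_le_mul_of_nonneg_left ?_ (hπ s a)
    have propagated : ∑ s', P s a s' * (Vsteps P π f k s' - Vsteps Q π g k s')
        ≤ ∑ s', P s a s' * Vsteps P π u k s' :=
      sum_le_sum fun s' _ => mul_le_mul_of_nonneg_left (ih' s') (hP s a s')
    have one_step := hu k k.lt_succ_self s a
    simp only [mul_sub, sub_mul, sum_sub_distrib] at propagated one_step
    linarith

lemma Vsteps_sub_Vsteps_sub_bonus_le {c τ : S → A → ℝ} {B : ℝ} (hP : ∀ s a s', 0 ≤ P s a s')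
    (hQ : ∀ s a, Q s a ∈ stdSimplex ℝ S) (hπ : ∀ s, π s ∈ stdSimplex ℝ A)
    (hτ : ∀ s a, τ s a ≤ 2) (hPQ : ∀ s a, ∑ s', |P s a s' - Q s a s'| ≤ τ s a)
    (hc : ∀ s a, |c s a| ≤ B) (H : ℕ) (s : S) :
    Vsteps P π c H s - Vsteps Q π (fun s a => c s a - H * τ s a) H s ≤
      Vsteps P π (fun s a => H * (2 * H + B) * τ s a) H s := by
  have τ_nonneg s a : 0 ≤ τ s a := (sum_nonneg fun _ _ => abs_nonneg _).trans (hPQ s a)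
  have cost_le s a : |c s a - H * τ s a| ≤ 2 * H + B := by
    calc |c s a - H * τ s a| ≤ |c s a| + |H * τ s a| := abs_sub _ _
      _ = |c s a| + H * τ s a := by rw [abs_of_nonneg (mul_nonneg H.cast_nonneg (τ_nonneg s a))]
      _ ≤ B + H * 2 := by gcongr; exacts [hc s a, hτ s a]
      _ = 2 * H + B := by ring
  refine Vsteps_sub_Vsteps_le_Vsteps hP (fun s => (hπ s).1) H (fun k hk s a => ?_) s
  have B_nonneg : 0 ≤ B := (abs_nonneg _).trans (hc s a)
  have k_add_one_le : (k : ℝ) + 1 ≤ H := mod_cast hk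
  calc c s a - (c s a - H * τ s a) +
        ∑ s', (P s a s' - Q s a s') * Vsteps Q π (fun s a => c s a - H * τ s a) k s'
      ≤ H * τ s a + (∑ s', |P s a s' - Q s a s'|) * (k * (2 * H + B)) := by
        rw [sub_sub_cancel]
        gcongr
        exact sum_mul_le_sum_abs_mul (abs_Vsteps_le hQ hπ cost_le k)
    _ ≤ H * τ s a + τ s a * (k * (2 * H + B)) := by gcongr; exact hPQ s a
    _ ≤ (2 * H + B) * τ s a + τ s a * (k * (2 * H + B)) := by
        gcongr
        · exact τ_nonneg s a
        · linarith
    _ = (k + 1) * (2 * H + B) * τ s a := by ring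
    _ ≤ H * (2 * H + B) * τ s a := by gcongr; exact τ_nonneg s a

end Values

section Occupancy

variable {S A : Type*} [Fintype S] [Fintype A] [DecidableEq S] {P : S → A → S → ℝ}
  {π : S → A → ℝ}

lemma stateDist_nonneg (s₀ : S) (hP : ∀ s a s', 0 ≤ P s a s') (hπ : ∀ s a, 0 ≤ π s a) (h : ℕ)
    (s : S) : 0 ≤ stateDist s₀ P π h s := by
  induction h generalizing s with
  | zero => unfold stateDist; positivity
  | succ h ih =>
    exact sum_nonneg fun s' _ => sum_nonneg fun a _ =>
      mul_nonneg (mul_nonneg (ih s') (hπ s' a)) (hP s' a s)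

lemma davg_nonneg (s₀ : S) (hP : ∀ s a s', 0 ≤ P s a s') (hπ : ∀ s a, 0 ≤ π s a) (H : ℕ)
    (s : S) (a : A) : 0 ≤ davg s₀ P π H s a :=
  mul_nonneg (by positivity) <|
    sum_nonneg fun h _ => mul_nonneg (stateDist_nonneg s₀ hP hπ h s) (hπ s a)

lemma sum_stateDist_succ_mul (s₀ : S) (P : S → A → S → ℝ) (π : S → A → ℝ) (h : ℕ) (v : S → ℝ) :
    ∑ s', stateDist s₀ P π (h + 1) s' * v s' =
      ∑ s, ∑ a, occ s₀ P π h s a * ∑ s', P s a s' * v s' := by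
  simp only [stateDist, occ, sum_mul, mul_sum, mul_assoc]
  rw [sum_comm]
  exact sum_congr rfl fun s _ => sum_comm

lemma sum_stateDist_mul_Vsteps_succ (s₀ : S) (P : S → A → S → ℝ) (π g : S → A → ℝ) (h k : ℕ) :
    ∑ s, stateDist s₀ P π h s * Vsteps P π g (k + 1) s =
      ∑ s, ∑ a, occ s₀ P π h s a * g s a +
        ∑ s, stateDist s₀ P π (h + 1) s * Vsteps P π g k s := by
  rw [sum_stateDist_succ_mul]
  simp only [Vsteps, occ, mul_sum, mul_add, mul_assoc, sum_add_distrib]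

lemma sum_stateDist_mul_Vsteps (s₀ : S) (P : S → A → S → ℝ) (π g : S → A → ℝ) (h k : ℕ) :
    ∑ s, stateDist s₀ P π h s * Vsteps P π g k s =
      ∑ i ∈ range k, ∑ s, ∑ a, occ s₀ P π (h + i) s a * g s a := by
  induction k generalizing h with
  | zero => simp [Vsteps]
  | succ k ih =>
    rw [sum_stateDist_mul_Vsteps_succ, ih, sum_range_succ', add_comm]
    simp only [add_zero, add_assoc, add_comm 1]

lemma Vsteps_eq_sum_occ (s₀ : S) (P : S → A → S → ℝ) (π g : S → A → ℝ) (k : ℕ) :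
    Vsteps P π g k s₀ = ∑ h ∈ range k, ∑ s, ∑ a, occ s₀ P π h s a * g s a := by
  simpa [stateDist] using sum_stateDist_mul_Vsteps s₀ P π g 0 k

lemma Vsteps_eq_mul_sum_davg (s₀ : S) (P : S → A → S → ℝ) (π g : S → A → ℝ) {H : ℕ}
    (hH : H ≠ 0) :
    Vsteps P π g H s₀ = H * ∑ s, ∑ a, davg s₀ P π H s a * g s a := by
  have mul_davg s a : H * davg s₀ P π H s a = ∑ h ∈ range H, occ s₀ P π h s a := by
    rw [davg, one_div, mul_inv_cancel_left₀ (Nat.cast_ne_zero.mpr hH)]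
  simp only [Vsteps_eq_sum_occ, mul_sum, ← mul_assoc, mul_davg, sum_mul]
  rw [sum_comm]
  exact sum_congr rfl fun s _ => sum_comm

end Occupancy

theorem per_iteration_regret_general
    {S A : Type*} [Fintype S] [Fintype A] [DecidableEq S]
    (s₀ : S) {H : ℕ} (hH : 1 ≤ H) {Pstar Phat : S → A → S → ℝ}
    (hPstar : ∀ s a, Pstar s a ∈ stdSimplex ℝ S) (hPhat : ∀ s a, Phat s a ∈ stdSimplex ℝ S)
    {σ : S → A → ℝ} (hcal : ∀ s a, ∑ s', |Phat s a s' - Pstar s a s'| ≤ min (σ s a) 2)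
    {c : S → A → ℝ} {B : ℝ} (hc : ∀ s a, |c s a| ≤ B)
    {π : S → A → ℝ} (hπ : ∀ s, π s ∈ stdSimplex ℝ A) {v δ : ℝ}
    (hopt : Vh H Phat π (fun s a => c s a - H * min (σ s a) 2) 0 s₀ ≤ v + δ) :
    Vh H Pstar π c 0 s₀ - v ≤
      2 * H ^ 2 * (2 * H + B) * (∑ s, ∑ a, davg s₀ Pstar π H s a * min (σ s a) 1) + δ := by
  have P_nonneg s a s' : 0 ≤ Pstar s a s' := (hPstar s a).1 s'
  have σ_nonneg s a : 0 ≤ σ s a :=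
    ((sum_nonneg fun _ _ => abs_nonneg _).trans (hcal s a)).trans (min_le_left _ _)
  have B_nonneg : 0 ≤ B := by
    obtain ⟨a, -⟩ := nonempty_of_sum_ne_zero ((hπ s₀).2.trans_ne one_ne_zero)
    exact (abs_nonneg _).trans (hc s₀ a)
  have gap : Vsteps Pstar π c H s₀ - Vsteps Phat π (fun s a => c s a - H * min (σ s a) 2) H s₀ ≤
      2 * H ^ 2 * (2 * H + B) * ∑ s, ∑ a, davg s₀ Pstar π H s a * min (σ s a) 1 := by
    calc Vsteps Pstar π c H s₀ - Vsteps Phat π (fun s a => c s a - H * min (σ s a) 2) H s₀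
        ≤ Vsteps Pstar π (fun s a => H * (2 * H + B) * min (σ s a) 2) H s₀ :=
          Vsteps_sub_Vsteps_sub_bonus_le P_nonneg hPhat hπ (fun _ _ => min_le_right _ _)
            (by simpa only [abs_sub_comm] using hcal) hc H s₀
      _ = H * ∑ s, ∑ a, davg s₀ Pstar π H s a * (H * (2 * H + B) * min (σ s a) 2) :=
          Vsteps_eq_mul_sum_davg s₀ Pstar π _ (Nat.one_le_iff_ne_zero.mp hH)
      _ ≤ H * ∑ s, ∑ a, davg s₀ Pstar π H s a * (H * (2 * H + B) * (2 * min (σ s a) 1)) := by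
          gcongr with s _ a _
          · exact davg_nonneg s₀ P_nonneg (fun s => (hπ s).1) H s a
          · exact min_le_mul_min_one (σ_nonneg s a) one_le_two
      _ = 2 * H ^ 2 * (2 * H + B) * ∑ s, ∑ a, davg s₀ Pstar π H s a * min (σ s a) 1 := by
          simp only [mul_sum]
          exact sum_congr rfl fun s _ => sum_congr rfl fun a _ => by ring
  simp only [Vh, Nat.sub_zero] at hopt ⊢
  linarith

/-- **Per-iteration regret bound.** Under a calibrated model and the optimistic
cost `c̃(s,a) = c(s) − H·min{σ(s,a),2}`, if
`V^π_{P̂;c̃} ≤ V^{π^e}_{P*;c} + 2Hε`, then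
`V^π_{P*;c} − V^{π^e}_{P*;c} ≤ 6H³·E_{(s,a)∼d^π_{P*}}[min{σ(s,a),1}] + 2Hε`. -/
theorem per_iteration_regret
    {S A : Type*} [Fintype S] [Fintype A] [DecidableEq S]
    [Nonempty S] [Nonempty A]
    (s₀ : S) (H : ℕ) (hH : 1 ≤ H)
    (Pstar Phat : S → A → S → ℝ)
    (hPstar : ∀ s a, (∀ s', 0 ≤ Pstar s a s') ∧ ∑ s', Pstar s a s' = 1)
    (hPhat : ∀ s a, (∀ s', 0 ≤ Phat s a s') ∧ ∑ s', Phat s a s' = 1)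
    (σ : S → A → ℝ) (hσ : ∀ s a, 0 ≤ σ s a)
    (hcal : ∀ s a, ∑ s', |Phat s a s' - Pstar s a s'| ≤ min (σ s a) 2)
    (c : S → ℝ) (hc : ∀ s, c s ∈ Set.Icc (0 : ℝ) 1)
    (b : S → A → ℝ) (hb : ∀ s a, b s a = H * min (σ s a) 2)
    (π πe : S → A → ℝ)
    (hπ : ∀ s, (∀ a, 0 ≤ π s a) ∧ ∑ a, π s a = 1)
    (hπe : ∀ s, (∀ a, 0 ≤ πe s a) ∧ ∑ a, πe s a = 1)
    (ε : ℝ) (hε : 0 ≤ ε)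
    (hopt : Vh H Phat π (fun s a => c s - b s a) 0 s₀ ≤
      Vh H Pstar πe (fun s _ => c s) 0 s₀ + 2 * H * ε) :
    Vh H Pstar π (fun s _ => c s) 0 s₀ - Vh H Pstar πe (fun s _ => c s) 0 s₀ ≤
      6 * H ^ 3 * (∑ s, ∑ a, davg s₀ Pstar π H s a * min (σ s a) 1) +
        2 * H * ε := by
  obtain rfl : b = fun s a => H * min (σ s a) 2 := funext₂ hb
  -- `B = H` is the largest bound on the costs for which `2 * H ^ 2 * (2 * H + B) ≤ 6 * H ^ 3`.
  have abs_cost_le s (_ : A) : |c s| ≤ H :=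
    (abs_le.mpr ⟨by linarith [(hc s).1], (hc s).2⟩).trans (Nat.one_le_cast.mpr hH)
  convert per_iteration_regret_general s₀ hH hPstar hPhat hcal abs_cost_le hπ hopt using 3
  ring

end
end
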